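/- arXiv:2507.05231 — 2 statements merged into one kernel-verified Lean document; each statement's English description precedes it below -/
import Mathlib

section
/- For every integer n ≥ 1 there exist finite sets X, Y, Z ⊆ ℤ each of cardinality n and a 3-AP-free set W ⊆ ℤ such that #{(x,y) ∈ X × Y : x + y ∈ Z and x − y ∈ W} ≥ r₃(n) · n² / (4(3n + 1)). In particular, p₃(n) ≥ r₃(n)/(4(3n+1)), where p₃(n) is the maximum of the probability P_{x∼X, y∼Y}(x + y ∈ Z and x − y ∈ W) over all such configurations with |X| = |Y| = |Z| = n and W 3-AP-free. -/
/-- `r3 n` is the maximum cardinality of a 3-AP-free subset of `{1, ..., n}`. -/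
noncomputable def r3 (n : ℕ) : ℕ :=
  sSup {k : ℕ | ∃ A : Finset ℤ, A ⊆ Finset.Icc 1 (n : ℤ) ∧ ThreeAPFree (A : Set ℤ) ∧ A.card = k}

/-!
Let `A ⊆ {1, ..., n}` be 3-AP-free of size `r3 n`. If `s` and `w` in `{1, ..., n}` have the same
parity, then `x = (s + w) / 2` and `y = (s - w) / 2` are integers with `x + y = s` and `x - y = w`,
and `x ∈ {1, ..., n}`, while `y` lies in an interval `Y` of `n` integers around `0`. So with
`X = Z = {1, ..., n}` and `W = A`, every `w ∈ A` is the difference of about `n / 2` admissible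
pairs, and always of at least `n / 3`.
-/

open Finset

theorem exists_threeAPFree_card_eq_r3 (n : ℕ) :
    ∃ A ⊆ Icc 1 (n : ℤ), ThreeAPFree (A : Set ℤ) ∧ #A = r3 n := by
  refine Nat.sSup_mem (s := {k | ∃ A ⊆ Icc 1 (n : ℤ), ThreeAPFree (A : Set ℤ) ∧ #A = k})
    ⟨0, ∅, by simp⟩ ⟨n, ?_⟩
  rintro _ ⟨A, hA, -, rfl⟩
  simpa using card_le_card hA

theorem card_filter_add_mem_sub_mem {G : Type*} [AddCommGroup G] [DecidableEq G]
    (X Y Z W : Finset G) :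
    #{p ∈ X ×ˢ Y | p.1 + p.2 ∈ Z ∧ p.1 - p.2 ∈ W} =
      ∑ w ∈ W, #{x ∈ X | x - w ∈ Y ∧ x + (x - w) ∈ Z} := by
  rw [card_eq_sum_card_fiberwise (f := fun p : G × G ↦ p.1 - p.2) (t := W)
    fun p hp ↦ (mem_filter.1 hp).2.2]
  refine sum_congr rfl fun w hw ↦ card_nbij' Prod.fst (fun x ↦ (x, x - w)) ?_ ?_ ?_ ?_
  · rintro ⟨x, y⟩ hp
    obtain ⟨⟨⟨hx, hy⟩, hs, -⟩, rfl⟩ := by simpa using hp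
    simp [hx, hy, hs]
  · intro x hx
    obtain ⟨hx, hy, hs⟩ := by simpa using hx
    simp [hx, hy, hs, hw]
  · rintro ⟨x, y⟩ hp
    obtain ⟨-, rfl⟩ := mem_filter.1 hp
    simp
  · exact fun _ _ ↦ rfl

theorem filter_sub_mem_Ico_add_mem_Icc {n w : ℤ} (hw : w ∈ Icc 1 n) :
    {x ∈ Icc 1 n | x - w ∈ Ico (-(n / 2)) (n - n / 2) ∧ x + (x - w) ∈ Icc 1 n} =
      Icc ((w + 2) / 2) ((n + w) / 2) := by
  ext x
  simp only [mem_filter, mem_Icc, mem_Ico] at hw ⊢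
  omega

-- The constant `3` is attained at `n = 3`, `w = 2`.
theorem le_three_mul_card_Icc {n : ℕ} {w : ℤ} (hw : w ∈ Icc 1 (n : ℤ)) :
    n ≤ 3 * #(Icc ((w + 2) / 2) ((n + w) / 2)) := by
  rw [Int.card_Icc]
  rw [mem_Icc] at hw
  omega

theorem card_mul_le_three_mul_card_filter {n : ℕ} {A : Finset ℤ} (hA : A ⊆ Icc 1 (n : ℤ)) :
    #A * n ≤ 3 * #{p ∈ Icc 1 (n : ℤ) ×ˢ Ico (-(n / 2 : ℤ)) (n - n / 2) |
      p.1 + p.2 ∈ Icc 1 (n : ℤ) ∧ p.1 - p.2 ∈ A} := by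
  rw [card_filter_add_mem_sub_mem, mul_sum, ← smul_eq_mul]
  refine card_nsmul_le_sum _ _ _ fun w hw ↦ ?_
  rw [filter_sub_mem_Ico_add_mem_Icc (hA hw)]
  exact le_three_mul_card_Icc (hA hw)

theorem stmt_15 (n : ℕ) (hn : 1 ≤ n) :
    ∃ (X Y Z : Finset ℤ) (W : Set ℤ),
      X.card = n ∧ Y.card = n ∧ Z.card = n ∧ ThreeAPFree W ∧
      (r3 n : ℝ) * n ^ 2 / (4 * (3 * n + 1))
        ≤ ({p : ℤ × ℤ | p.1 ∈ X ∧ p.2 ∈ Y ∧ p.1 + p.2 ∈ Z ∧ p.1 - p.2 ∈ W}.ncard : ℝ) := by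
  obtain ⟨A, hA, hfree, hcard⟩ := exists_threeAPFree_card_eq_r3 n
  set X := Icc 1 (n : ℤ)
  set Y := Ico (-(n / 2 : ℤ)) (n - n / 2)
  refine ⟨X, Y, X, A, by simp [X], by simp [Y], by simp [X], hfree, ?_⟩
  have hpairs : {p : ℤ × ℤ | p.1 ∈ X ∧ p.2 ∈ Y ∧ p.1 + p.2 ∈ X ∧ p.1 - p.2 ∈ (A : Set ℤ)} =
      ({p ∈ X ×ˢ Y | p.1 + p.2 ∈ X ∧ p.1 - p.2 ∈ A} : Finset (ℤ × ℤ)) := by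
    ext p
    simp [and_assoc]
  rw [hpairs, Set.ncard_coe_finset, ← hcard]
  have hcount : #A * n ≤ 3 * #{p ∈ X ×ˢ Y | p.1 + p.2 ∈ X ∧ p.1 - p.2 ∈ A} :=
    card_mul_le_three_mul_card_filter hA
  rify at hcount
  calc (#A : ℝ) * n ^ 2 / (4 * (3 * n + 1))
    _ ≤ #A * n / 3 := by
      rw [div_le_div_iff₀ (by positivity) (by norm_num)]
      have : (0 : ℝ) ≤ #A * n * (9 * n + 4) := by positivity
      linarith
    _ ≤ #{p ∈ X ×ˢ Y | p.1 + p.2 ∈ X ∧ p.1 - p.2 ∈ A} := by linarith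
end

section
/- There exist absolute constants C > 0 and c > 0 such that for every integer n ≥ 1 and all finite sets X, Y, Z, W ⊆ ℤ with |X| = |Y| = |Z| = n and W 3-AP-free, one has #{(x,y) ∈ X × Y : x + y ∈ Z and x − y ∈ W} ≤ C · (r₃(n)/n)^c · n². In other words, p₃(n) ≪ (r₃(n)/n)^{Ω(1)}. -/
/-!
Let `r x y` mean `x + y ∈ Z` and `x - y ∈ W`, with edge density `δ` on `X × Y`. By the
Balog–Szemerédi–Gowers argument in the form of dependent random choice, the neighbourhood of
some `y ∈ Y` contains a set `A` of size at least `δ n / 4` with `|A - A| ≤ 1024 δ⁻⁵ n`. Then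
`A - y ⊆ W`, so `A` is itself 3-AP-free.

By Plünnecke–Ruzsa, `D = 2A - 2A` has size `O(δ⁻²³ n)`. Choose `θ ∈ ℝ/ℤ` such that `d • θ` stays
away from `0` for all nonzero `d ∈ D`; rounding `a • θ` down to a multiple of `1 / (4 |D|)` then
embeds `A` in `{0, …, 4 |D| - 1}` without creating new additive relations `a + b = c + d`. Covering
this interval by intervals of length `n` gives `δ n / 4 ≤ |A| ≪ δ⁻²³ r₃(n)`.
-/

open Finset MeasureTheory Pointwise

section RothNumber

lemma rothNumberNat_le_r3 (n : ℕ) : rothNumberNat n ≤ r3 n := by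
  obtain ⟨s, hsub, hcard, hfree⟩ := addRothNumber_spec (Ico 1 (n + 1))
  rw [addRothNumber_Ico, Nat.add_sub_cancel] at hcard
  refine le_csSup ⟨n, ?_⟩ ⟨s.map Nat.castEmbedding, ?_, ?_, by rw [card_map, hcard]⟩
  · rintro _ ⟨A, hA, -, rfl⟩
    simpa using card_le_card hA
  · intro z hz
    obtain ⟨x, hx, rfl⟩ := mem_map.1 hz
    have := mem_Ico.1 (hsub hx)
    simp only [Nat.castEmbedding_apply, mem_Icc]
    omega
  · rw [coe_map]
    exact hfree.image' (Nat.castAddMonoidHom ℤ) Nat.cast_injective.injOn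

lemma rothNumberNat_mul_le (k n : ℕ) : rothNumberNat (k * n) ≤ k * rothNumberNat n := by
  induction k with
  | zero => simp
  | succ k ih =>
    rw [Nat.succ_mul, Nat.succ_mul]
    exact (rothNumberNat_add_le _ _).trans (Nat.add_le_add_right ih _)

lemma rothNumberNat_le_div_add_one_mul_r3 (m : ℕ) {n : ℕ} (hn : 0 < n) :
    (rothNumberNat m : ℝ) ≤ (m / n + 1) * r3 n := by
  have hm : m ≤ (m / n + 1) * n := mul_comm n _ ▸ (Nat.lt_mul_div_succ m hn).le
  calc (rothNumberNat m : ℝ) ≤ ((m / n + 1 : ℕ) : ℝ) * r3 n := by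
        exact_mod_cast (rothNumberNat.mono hm).trans <|
          (rothNumberNat_mul_le _ _).trans (Nat.mul_le_mul_left _ (rothNumberNat_le_r3 n))
    _ ≤ (m / n + 1) * r3 n := by
        push_cast
        gcongr
        exact Nat.cast_div_le

end RothNumber

section Modelling

lemma exists_forall_lt_norm_zsmul {D : Finset ℤ} (hD : 0 ∉ D) {ε : ℝ} (hε : #D * (2 * ε) < 1) :
    ∃ θ : UnitAddCircle, ∀ d ∈ D, ε < ‖d • θ‖ := by
  let near (d : ℤ) : Set UnitAddCircle := (d • ·) ⁻¹' Metric.closedBall 0 ε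
  have volume_near : ∀ d ∈ D, volume (near d) ≤ ENNReal.ofReal (2 * ε) := by
    intro d hd
    have hd0 : d ≠ 0 := ne_of_mem_of_not_mem hd hD
    rw [(Measure.measurePreserving_zsmul volume hd0).measure_preimage
      measurableSet_closedBall.nullMeasurableSet, AddCircle.volume_closedBall]
    exact ENNReal.ofReal_le_ofReal (min_le_right _ _)
  have volume_union : volume (⋃ d ∈ D, near d) < 1 :=
    calc volume (⋃ d ∈ D, near d) ≤ ∑ d ∈ D, volume (near d) := measure_biUnion_finset_le _ _
      _ ≤ #D • ENNReal.ofReal (2 * ε) := sum_le_card_nsmul _ _ _ volume_near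
      _ = ENNReal.ofReal (#D * (2 * ε)) := by rw [← ENNReal.ofReal_nsmul, nsmul_eq_mul]
      _ < 1 := ENNReal.ofReal_lt_one.2 hε
  obtain ⟨θ, hθ⟩ : ∃ θ, θ ∉ ⋃ d ∈ D, near d := by
    by_contra! h
    rw [Set.eq_univ_of_forall h, UnitAddCircle.measure_univ] at volume_union
    exact lt_irrefl _ volume_union
  refine ⟨θ, fun d hd => ?_⟩
  simpa [near] using fun h => hθ (Set.mem_biUnion hd h)

lemma norm_coe_lt_two_div_of_floor_add_floor_eq {N s t u v : ℝ} (hN : 0 < N)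
    (h : ⌊N * Int.fract s⌋₊ + ⌊N * Int.fract t⌋₊ = ⌊N * Int.fract u⌋₊ + ⌊N * Int.fract v⌋₊) :
    ‖((s + t - (u + v) : ℝ) : UnitAddCircle)‖ < 2 / N := by
  have floor_le (x : ℝ) : (⌊N * Int.fract x⌋₊ : ℝ) ≤ N * Int.fract x := Nat.floor_le (by positivity)
  have lt_floor (x : ℝ) : N * Int.fract x < ⌊N * Int.fract x⌋₊ + 1 := Nat.lt_floor_add_one _
  have hfloor : (⌊N * Int.fract s⌋₊ + ⌊N * Int.fract t⌋₊ : ℝ)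
      = ⌊N * Int.fract u⌋₊ + ⌊N * Int.fract v⌋₊ := by exact_mod_cast h
  calc ‖((s + t - (u + v) : ℝ) : UnitAddCircle)‖
      = ‖((Int.fract s + Int.fract t - (Int.fract u + Int.fract v) : ℝ) : UnitAddCircle)‖ := by
        simp only [AddCircle.coe_add, AddCircle.coe_sub, AddCircle.coe_fract]
    _ ≤ |Int.fract s + Int.fract t - (Int.fract u + Int.fract v)| :=
        QuotientAddGroup.norm_mk_le_norm
    _ < 2 / N := by
        rw [lt_div_iff₀' hN, ← abs_of_pos hN, ← abs_mul, abs_lt]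
        constructor <;> linarith [floor_le s, floor_le t, floor_le u, floor_le v,
          lt_floor s, lt_floor t, lt_floor u, lt_floor v]

lemma exists_forall_lt_and_add_eq_add (A : Finset ℤ) :
    ∃ φ : ℤ → ℕ, (∀ a ∈ A, φ a < 4 * #(A + A - (A + A))) ∧
      ∀ a ∈ A, ∀ b ∈ A, ∀ c ∈ A, ∀ d ∈ A, φ a + φ b = φ c + φ d → a + b = c + d := by
  obtain rfl | hA := A.eq_empty_or_nonempty
  · simp
  set D := A + A - (A + A)
  have zero_mem : 0 ∈ D := by
    obtain ⟨s, hs⟩ := hA.add hA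
    exact mem_sub.2 ⟨s, hs, s, hs, sub_self s⟩
  have hD : (0 : ℝ) < #D := by exact_mod_cast card_pos.2 ⟨0, zero_mem⟩
  have hN : (0 : ℝ) < (4 * #D : ℕ) := by push_cast; positivity
  have hcard : #(D.erase 0) * (2 * (2 / (4 * #D : ℕ)) : ℝ) < 1 := by
    have : (#(D.erase 0) : ℝ) < #D := by exact_mod_cast card_erase_lt_of_mem zero_mem
    push_cast
    field_simp
    linarith
  obtain ⟨θ, hθ⟩ := exists_forall_lt_norm_zsmul (notMem_erase 0 D) hcard
  obtain ⟨t, rfl⟩ := QuotientAddGroup.mk_surjective θ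
  refine ⟨fun a => ⌊(4 * #D : ℕ) * Int.fract (a * t)⌋₊, fun a _ => ?_,
    fun a ha b hb c hc d hd h => ?_⟩
  · exact (Nat.floor_lt (by positivity)).2 (mul_lt_of_lt_one_right hN (Int.fract_lt_one _))
  · by_contra hne
    have hmem : a + b - (c + d) ∈ D.erase 0 :=
      mem_erase.2 ⟨sub_ne_zero.2 hne, sub_mem_sub (add_mem_add ha hb) (add_mem_add hc hd)⟩
    have hcoe : (a + b - (c + d)) • (t : UnitAddCircle)
        = ((a * t + b * t - (c * t + d * t) : ℝ) : UnitAddCircle) := by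
      simp only [← AddCircle.coe_zsmul, zsmul_eq_mul]
      push_cast
      ring_nf
    refine (hθ _ hmem).not_gt ?_
    rw [hcoe]
    exact norm_coe_lt_two_div_of_floor_add_floor_eq hN h

lemma card_le_rothNumberNat_of_threeAPFree {A : Finset ℤ} (hA : ThreeAPFree (A : Set ℤ)) :
    #A ≤ rothNumberNat (4 * #(A + A - (A + A))) := by
  obtain ⟨φ, φ_lt, hφ⟩ := exists_forall_lt_and_add_eq_add A
  have φ_injOn : Set.InjOn φ A := fun a ha b hb h => by
    have := hφ a ha a ha b hb b hb (by rw [h])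
    omega
  refine ThreeAPFree.le_rothNumberNat (A.image φ) ?_ ?_ (card_image_of_injOn φ_injOn)
  · rw [coe_image]
    rintro _ ⟨a, ha, rfl⟩ _ ⟨b, hb, rfl⟩ _ ⟨c, hc, rfl⟩ h
    rw [hA ha hb hc (hφ a ha c hc b hb b hb h)]
  · simpa using φ_lt

end Modelling

section DependentRandomChoice

variable {α β : Type*}

/-- The number of common neighbours in `Y` of the left vertices `a` and `a'` of the bipartite graph
`r`. -/
def codegree (r : α → β → Prop) [∀ a, DecidablePred (r a)] (Y : Finset β) (a a' : α) : ℕ :=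
  #{b ∈ Y | r a b ∧ r a' b}

/-- The left vertices `a` and `a'` of the bipartite graph `r` have fewer than `t` common neighbours
in `Y`. The threshold is real since it is a multiple of an edge density. -/
abbrev HasLowCodegree (r : α → β → Prop) [∀ a, DecidablePred (r a)] (Y : Finset β) (t : ℝ)
    (a a' : α) : Prop :=
  codegree r Y a a' < t

lemma exists_subset_card_le_two_mul_card (N : Finset α) (bad : α → α → Prop)
    [∀ a, DecidablePred (bad a)] (h : 8 * #(Rel.interedges bad N N) ≤ #N ^ 2) :
    ∃ A ⊆ N, #N ≤ 2 * #A ∧ ∀ a ∈ A, 4 * #(N.bipartiteAbove bad a) ≤ #N := by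
  let A := {a ∈ N | 4 * #(N.bipartiteAbove bad a) ≤ #N}
  let R := {a ∈ N | ¬ 4 * #(N.bipartiteAbove bad a) ≤ #N}
  refine ⟨A, filter_subset _ _, ?_, fun a ha => (mem_filter.1 ha).2⟩
  have card_add_card : #A + #R = #N := card_filter_add_card_filter_not _
  have markov : #R * #N ≤ 4 * #(Rel.interedges bad N N) :=
    calc #R * #N ≤ ∑ a ∈ R, 4 * #(N.bipartiteAbove bad a) :=
          card_nsmul_le_sum _ _ _ fun a ha => (not_le.1 (mem_filter.1 ha).2).le
      _ ≤ ∑ a ∈ N, 4 * #(N.bipartiteAbove bad a) := sum_le_sum_of_subset (filter_subset _ _)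
      _ = 4 * #(Rel.interedges bad N N) := by
          rw [← mul_sum, Rel.interedges, card_filter, sum_product]
          simp only [bipartiteAbove, card_filter]
  obtain h0 | h0 := (#N).eq_zero_or_pos
  · omega
  · have : 2 * #R ≤ #N := Nat.le_of_mul_le_mul_right (by linarith) h0
    omega

variable (r : α → β → Prop) [∀ a, DecidablePred (r a)]

lemma card_interedges_eq_sum_card_bipartiteBelow (X : Finset α) (Y : Finset β) :
    #(Rel.interedges r X Y) = ∑ y ∈ Y, #(X.bipartiteBelow r y) := by
  rw [Rel.interedges, card_filter, sum_product_right]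
  simp only [bipartiteBelow, card_filter]

lemma sum_card_interedges_hasLowCodegree_le (X : Finset α) (Y : Finset β) {t : ℝ} (ht : 0 ≤ t) :
    ∑ y ∈ Y, (#(Rel.interedges (HasLowCodegree r Y t)
      (X.bipartiteBelow r y) (X.bipartiteBelow r y)) : ℝ) ≤ t * #X ^ 2 := by
  let bad := Rel.interedges (HasLowCodegree r Y t) X X
  have double_count : ∑ y ∈ Y, #(Rel.interedges (HasLowCodegree r Y t)
      (X.bipartiteBelow r y) (X.bipartiteBelow r y)) = ∑ q ∈ bad, codegree r Y q.1 q.2 := by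
    convert sum_card_bipartiteAbove_eq_sum_card_bipartiteBelow (s := Y) (t := bad)
      (fun y q => r q.1 y ∧ r q.2 y) using 3
    · ext q
      simp only [bad, Rel.mem_interedges_iff, mem_bipartiteBelow, mem_bipartiteAbove]
      tauto
    · rfl
  calc ∑ y ∈ Y, (#(Rel.interedges (HasLowCodegree r Y t)
        (X.bipartiteBelow r y) (X.bipartiteBelow r y)) : ℝ)
      = ∑ q ∈ bad, (codegree r Y q.1 q.2 : ℝ) := by exact_mod_cast double_count
    _ ≤ #bad • t := sum_le_card_nsmul _ _ _ fun q hq => (Rel.mem_interedges_iff.1 hq).2.2.le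
    _ ≤ t * #X ^ 2 := by
        rw [nsmul_eq_mul, mul_comm, sq]
        gcongr
        exact_mod_cast Rel.card_interedges_le_mul _ X X

lemma exists_card_interedges_hasLowCodegree_le_sq {X : Finset α} {Y : Finset β} (hY : Y.Nonempty)
    {δ : ℝ} (hδ : 0 ≤ δ) (h : δ * (#X * #Y) ≤ #(Rel.interedges r X Y)) :
    ∃ y ∈ Y, δ ^ 2 / 2 * #X ^ 2 + 8 * #(Rel.interedges
      (HasLowCodegree r Y (δ ^ 2 / 16 * #Y))
      (X.bipartiteBelow r y) (X.bipartiteBelow r y)) ≤ (#(X.bipartiteBelow r y) : ℝ) ^ 2 := by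
  refine exists_le_of_sum_le hY ?_
  have hY0 : (0 : ℝ) < #Y := by exact_mod_cast hY.card_pos
  have sum_sq : δ ^ 2 * #X ^ 2 * #Y ≤ ∑ y ∈ Y, (#(X.bipartiteBelow r y) : ℝ) ^ 2 := by
    refine le_of_mul_le_mul_left ?_ hY0
    calc #Y * (δ ^ 2 * #X ^ 2 * #Y) = (δ * (#X * #Y)) ^ 2 := by ring
      _ ≤ (#(Rel.interedges r X Y) : ℝ) ^ 2 := by gcongr
      _ = (∑ y ∈ Y, (#(X.bipartiteBelow r y) : ℝ)) ^ 2 := by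
          exact_mod_cast congrArg (· ^ 2) (card_interedges_eq_sum_card_bipartiteBelow r X Y)
      _ ≤ #Y * ∑ y ∈ Y, (#(X.bipartiteBelow r y) : ℝ) ^ 2 := sq_sum_le_card_mul_sum_sq
  have sum_bad := sum_card_interedges_hasLowCodegree_le r X Y (t := δ ^ 2 / 16 * #Y) (by positivity)
  rw [sum_add_distrib, sum_const, nsmul_eq_mul, ← mul_sum]
  linarith

lemma exists_subset_bipartiteBelow_forall_le_card_codegree {X : Finset α} {Y : Finset β}
    (hY : Y.Nonempty) {δ : ℝ} (hδ : 0 ≤ δ) (h : δ * (#X * #Y) ≤ #(Rel.interedges r X Y)) :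
    ∃ y ∈ Y, ∃ A ⊆ X.bipartiteBelow r y, δ / 4 * #X ≤ #A ∧ ∀ a ∈ A, ∀ a' ∈ A,
      δ / 4 * #X ≤ #{c ∈ X | δ ^ 2 / 16 * #Y ≤ codegree r Y a c ∧
        δ ^ 2 / 16 * #Y ≤ codegree r Y a' c} := by
  classical
  obtain ⟨y, hy, hN⟩ := exists_card_interedges_hasLowCodegree_le_sq r hY hδ h
  set N := X.bipartiteBelow r y
  set bad := HasLowCodegree r Y (δ ^ 2 / 16 * #Y)
  have hbad : 8 * #(Rel.interedges bad N N) ≤ #N ^ 2 := by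
    have : (0 : ℝ) ≤ δ ^ 2 / 2 * #X ^ 2 := by positivity
    exact_mod_cast (by linarith : (8 * #(Rel.interedges bad N N) : ℝ) ≤ #N ^ 2)
  have le_card_N : δ / 2 * #X ≤ #N := by
    refine le_of_sq_le_sq ?_ (by positivity)
    have : (0 : ℝ) ≤ δ ^ 2 * #X ^ 2 := by positivity
    linarith [(#(Rel.interedges bad N N)).cast_nonneg (α := ℝ)]
  obtain ⟨A, hAN, hA, hA_bad⟩ := exists_subset_card_le_two_mul_card N bad hbad
  have half {k : ℕ} (hk : #N ≤ 2 * k) : δ / 4 * #X ≤ k := by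
    have : (#N : ℝ) ≤ 2 * k := by exact_mod_cast hk
    linarith
  refine ⟨y, hy, A, hAN, half hA, fun a ha a' ha' => half ?_⟩
  have cover : N ⊆
      {c ∈ X | δ ^ 2 / 16 * #Y ≤ codegree r Y a c ∧ δ ^ 2 / 16 * #Y ≤ codegree r Y a' c} ∪
        (N.bipartiteAbove bad a ∪ N.bipartiteAbove bad a') := by
    intro c hc
    have hcX : c ∈ X := (mem_bipartiteBelow _).1 hc |>.1
    simp only [mem_union, mem_filter, mem_bipartiteAbove, hcX, hc, true_and, bad, ← not_lt]
    tauto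
  have := (card_le_card cover).trans <| (card_union_le _ _).trans <|
    Nat.add_le_add_left (card_union_le _ _) _
  have := hA_bad a ha
  have := hA_bad a' ha'
  omega

end DependentRandomChoice

section BalogSzemerediGowers

variable {G : Type*} [AddCommGroup G] [DecidableEq G]

/-- The representations of `w` as an alternating sum `z₁ - z₂ + z₃ - z₄` of elements of `Z`. -/
def alternatingReps (Z : Finset G) (w : G) : Finset (G × G × G × G) :=
  {z ∈ Z ×ˢ Z ×ˢ Z ×ˢ Z | z.1 - z.2.1 + z.2.2.1 - z.2.2.2 = w}

lemma sum_card_alternatingReps_le (Z S : Finset G) :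
    ∑ w ∈ S, #(alternatingReps Z w) ≤ #Z ^ 4 := by
  calc ∑ w ∈ S, #(alternatingReps Z w) ≤ #(Z ×ˢ Z ×ˢ Z ×ˢ Z) := by
        unfold alternatingReps
        rw [sum_card_fiberwise_eq_card_filter]
        exact card_filter_le _ _
    _ = #Z ^ 4 := by
        simp only [card_product]
        ring

variable {r : G → G → Prop} [∀ a, DecidablePred (r a)] {Z : Finset G}

-- A path `a, b, c, b', a'` in `r` writes `a - a'` as `(a + b) - (c + b) + (c + b') - (a' + b')`.
lemma sum_codegree_mul_codegree_le_card_alternatingReps (hr : ∀ a b, r a b → a + b ∈ Z)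
    (X Y : Finset G) (a a' : G) :
    ∑ c ∈ X, codegree r Y a c * codegree r Y a' c ≤ #(alternatingReps Z (a - a')) := by
  let paths : Finset (Σ _ : G, G × G) :=
    X.sigma fun c => {b ∈ Y | r a b ∧ r c b} ×ˢ {b ∈ Y | r a' b ∧ r c b}
  calc ∑ c ∈ X, codegree r Y a c * codegree r Y a' c = #paths := by
        simp only [paths, card_sigma, card_product, codegree]
    _ ≤ #(alternatingReps Z (a - a')) := by
        refine card_le_card_of_injOn
          (fun s => (a + s.2.1, s.1 + s.2.1, s.1 + s.2.2, a' + s.2.2)) ?_ ?_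
        · rintro ⟨c, b, b'⟩ h
          simp only [paths, mem_coe, mem_sigma, mem_product, mem_filter] at h
          obtain ⟨-, ⟨-, hab, hcb⟩, -, hab', hcb'⟩ := h
          simp only [alternatingReps, mem_coe, mem_filter, mem_product]
          exact ⟨⟨hr _ _ hab, hr _ _ hcb, hr _ _ hcb', hr _ _ hab'⟩, by abel⟩
        · rintro ⟨c, b, b'⟩ - ⟨d, e, e'⟩ - h
          simp only [Prod.mk.injEq, add_right_inj] at h
          obtain ⟨rfl, hc, -, rfl⟩ := h
          rw [add_right_cancel hc]

lemma exists_subset_bipartiteBelow_card_sub_le (hr : ∀ a b, r a b → a + b ∈ Z) {X Y : Finset G}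
    (hY : Y.Nonempty) {δ : ℝ} (hδ : 0 ≤ δ) (h : δ * (#X * #Y) ≤ #(Rel.interedges r X Y)) :
    ∃ y ∈ Y, ∃ A ⊆ X.bipartiteBelow r y, δ / 4 * #X ≤ #A ∧
      δ ^ 5 * #X * #Y ^ 2 * #(A - A) ≤ 1024 * #Z ^ 4 := by
  obtain ⟨y, hy, A, hAN, hA, hA_codegree⟩ :=
    exists_subset_bipartiteBelow_forall_le_card_codegree r hY hδ h
  refine ⟨y, hy, A, hAN, hA, ?_⟩
  have le_card_reps : ∀ w ∈ A - A,
      δ / 4 * #X * (δ ^ 2 / 16 * #Y) ^ 2 ≤ #(alternatingReps Z w) := by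
    intro w hw
    obtain ⟨a, ha, a', ha', rfl⟩ := mem_sub.1 hw
    set M := {c ∈ X | δ ^ 2 / 16 * #Y ≤ codegree r Y a c ∧ δ ^ 2 / 16 * #Y ≤ codegree r Y a' c}
    calc δ / 4 * #X * (δ ^ 2 / 16 * #Y) ^ 2 ≤ #M * (δ ^ 2 / 16 * #Y) ^ 2 := by
          gcongr
          exact hA_codegree a ha a' ha'
      _ ≤ ∑ c ∈ M, (codegree r Y a c * codegree r Y a' c : ℝ) := by
          rw [← nsmul_eq_mul]
          refine card_nsmul_le_sum _ _ _ fun c hc => ?_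
          obtain ⟨-, hac, hac'⟩ := mem_filter.1 hc
          rw [sq]
          gcongr
      _ ≤ #(alternatingReps Z (a - a')) := by
          exact_mod_cast sum_codegree_mul_codegree_le_card_alternatingReps hr M Y a a'
  have card_sub_mul_le := calc
    #(A - A) * (δ / 4 * #X * (δ ^ 2 / 16 * #Y) ^ 2)
      ≤ ∑ w ∈ A - A, (#(alternatingReps Z w) : ℝ) := by
        rw [← nsmul_eq_mul]
        exact card_nsmul_le_sum _ _ _ le_card_reps
    _ ≤ #Z ^ 4 := by exact_mod_cast sum_card_alternatingReps_le Z (A - A)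
  linarith

lemma card_pow_three_mul_card_add_sub_add_le (A : Finset G) :
    #A ^ 3 * #(A + A - (A + A)) ≤ #(A - A) ^ 4 := by
  obtain rfl | hA := A.eq_empty_or_nonempty
  · simp
  have hA0 : (#A : ℚ≥0) ≠ 0 := by simpa using hA.ne_empty
  have pluennecke := pluennecke_ruzsa_inequality_nsmul_sub_nsmul_sub hA A 2 2
  rw [two_nsmul] at pluennecke
  suffices (#A ^ 3 * #(A + A - (A + A)) : ℚ≥0) ≤ #(A - A) ^ 4 by exact_mod_cast this
  calc (#A ^ 3 * #(A + A - (A + A)) : ℚ≥0)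
      ≤ #A ^ 3 * ((#(A - A) / #A) ^ (2 + 2) * #A) := by gcongr
    _ = #(A - A) ^ 4 := by
        rw [div_pow]
        field_simp [hA0]

end BalogSzemerediGowers

lemma pow_le_mul_r3_div_of_threeAPFree {n : ℕ} (hn : 0 < n) {A : Finset ℤ}
    (hA : ThreeAPFree (A : Set ℤ)) {δ : ℝ} (hδ0 : 0 ≤ δ) (hδ1 : δ ≤ 1)
    (hcard : δ / 4 * n ≤ #A) (hsub : δ ^ 5 * #(A - A) ≤ 1024 * n) :
    δ ^ 24 ≤ 2 ^ 51 * ((r3 n : ℝ) / n) := by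
  have hn0 : (0 : ℝ) < n := by exact_mod_cast hn
  set M := #(A + A - (A + A))
  have hM : δ ^ 23 * M ≤ 2 ^ 46 * n := by
    refine le_of_mul_le_mul_left ?_ (pow_pos hn0 3)
    calc n ^ 3 * (δ ^ 23 * M) = 64 * (δ ^ 5) ^ 4 * ((δ / 4 * n) ^ 3 * M) := by ring
      _ ≤ 64 * (δ ^ 5) ^ 4 * (#A ^ 3 * M) := by gcongr
      _ ≤ 64 * (δ ^ 5) ^ 4 * #(A - A) ^ 4 := by
          gcongr
          exact_mod_cast card_pow_three_mul_card_add_sub_add_le A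
      _ = 64 * (δ ^ 5 * #(A - A)) ^ 4 := by ring
      _ ≤ 64 * (1024 * n) ^ 4 := by gcongr
      _ = n ^ 3 * (2 ^ 46 * n) := by ring
  have card_le : (#A : ℝ) ≤ (4 * M / n + 1) * r3 n :=
    calc (#A : ℝ) ≤ rothNumberNat (4 * M) := by
          exact_mod_cast card_le_rothNumberNat_of_threeAPFree hA
      _ ≤ (4 * M / n + 1) * r3 n := by
          exact_mod_cast rothNumberNat_le_div_add_one_mul_r3 (4 * M) hn
  rw [← mul_div_assoc, le_div_iff₀ hn0]
  calc δ ^ 24 * n = 4 * δ ^ 23 * (δ / 4 * n) := by ring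
    _ ≤ 4 * δ ^ 23 * ((4 * M / n + 1) * r3 n) :=
        mul_le_mul_of_nonneg_left (hcard.trans card_le) (by positivity)
    _ = 4 * (4 * (δ ^ 23 * M) / n + δ ^ 23) * r3 n := by ring
    _ ≤ 4 * (4 * (2 ^ 46 * n) / n + 1) * r3 n := by gcongr; exact pow_le_one₀ hδ0 hδ1
    _ = (2 ^ 50 + 4) * r3 n := by field_simp; ring
    _ ≤ 2 ^ 51 * r3 n := by gcongr; norm_num

lemma pow_le_mul_r3_div_of_le_card {n : ℕ} (hn : 0 < n) {X Y Z W : Finset ℤ} (hX : #X = n)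
    (hY : #Y = n) (hZ : #Z = n) (hW : ThreeAPFree (W : Set ℤ)) {δ : ℝ} (hδ : 0 ≤ δ)
    (h : δ * n ^ 2 ≤ #{p ∈ X ×ˢ Y | p.1 + p.2 ∈ Z ∧ p.1 - p.2 ∈ W}) :
    δ ^ 24 ≤ 2 ^ 51 * ((r3 n : ℝ) / n) := by
  have hn0 : (0 : ℝ) < n := by exact_mod_cast hn
  let r (x y : ℤ) : Prop := x + y ∈ Z ∧ x - y ∈ W
  have hr : δ * (#X * #Y) ≤ #(Rel.interedges r X Y) := by rwa [hX, hY, ← sq]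
  have hδ1 : δ ≤ 1 := by
    have : δ * (#X * #Y) ≤ 1 * (#X * #Y) := by
      rw [one_mul]
      exact hr.trans (by exact_mod_cast Rel.card_interedges_le_mul r X Y)
    exact le_of_mul_le_mul_right this (by rw [hX, hY]; positivity)
  obtain ⟨y, -, A, hAy, hA, hA_sub⟩ := exists_subset_bipartiteBelow_card_sub_le
    (fun _ _ (hxy : r _ _) => hxy.1) (card_pos.1 (hY ▸ hn)) hδ hr
  have A_subset : (A : Set ℤ) ⊆ y +ᵥ (W : Set ℤ) := fun x hx =>
    Set.mem_vadd_set.2 ⟨x - y, ((mem_bipartiteBelow r).1 (hAy hx)).2.2, add_sub_cancel y x⟩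
  have A_free : ThreeAPFree (A : Set ℤ) := hW.vadd_set.mono A_subset
  rw [hX] at hA
  refine pow_le_mul_r3_div_of_threeAPFree hn A_free hδ hδ1 hA ?_
  rw [hX, hY, hZ] at hA_sub
  exact le_of_mul_le_mul_left (by linarith) (pow_pos hn0 3)

theorem stmt_16 :
    ∃ C c : ℝ, 0 < C ∧ 0 < c ∧
      ∀ n : ℕ, 1 ≤ n → ∀ X Y Z W : Finset ℤ,
        X.card = n → Y.card = n → Z.card = n → ThreeAPFree (W : Set ℤ) →
        (((X ×ˢ Y).filter (fun p => p.1 + p.2 ∈ Z ∧ p.1 - p.2 ∈ W)).card : ℝ)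
          ≤ C * ((r3 n : ℝ) / n) ^ c * n ^ 2 := by
  refine ⟨8, 1 / 24, by norm_num, by norm_num, fun n hn X Y Z W hX hY hZ hW => ?_⟩
  have hn2 : (0 : ℝ) < n ^ 2 := by positivity
  rw [← div_le_iff₀ hn2]
  refine le_of_pow_le_pow_left₀ (n := 24) (by norm_num) (by positivity) ?_
  calc _ ≤ 2 ^ 51 * ((r3 n : ℝ) / n) :=
        pow_le_mul_r3_div_of_le_card hn hX hY hZ hW (by positivity) (div_mul_cancel₀ _ hn2.ne').le
    _ ≤ 8 ^ 24 * ((r3 n : ℝ) / n) := by gcongr; norm_num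
    _ = (8 * ((r3 n : ℝ) / n) ^ (1 / 24 : ℝ)) ^ 24 := by
        rw [mul_pow, ← Real.rpow_mul_natCast (by positivity)]
        norm_num
end
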